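/- Let R₁, …, Rₙ (n ≥ 2) be axis-aligned rectangles in ℝ² all of whose corner coordinates are rational numbers. Then the optimal value δ*₁ for the L₁ distance is a rational number, and it is attained by a selection all of whose points have rational coordinates. -/

import Mathlib

open Set

/-- The `L₁` distance on `ℝ²`. -/
noncomputable def d1 (p q : ℝ × ℝ) : ℝ := |p.1 - q.1| + |p.2 - q.2|

/-- The axis-aligned rectangle `[a,b] × [c,d]`. -/
def rect (a b c d : ℝ) : Set (ℝ × ℝ) := Set.Icc a b ×ˢ Set.Icc c d

/-- The minimum pairwise distance of the points `p 0, …, p (n-1)` with respect to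
the distance function `d`. -/
noncomputable def minPairDist {n : ℕ} (d : (ℝ × ℝ) → (ℝ × ℝ) → ℝ)
    (p : Fin n → ℝ × ℝ) : ℝ :=
  sInf {x : ℝ | ∃ i j : Fin n, i ≠ j ∧ x = d (p i) (p j)}

/-- The set of values of selections from the rectangles `R i`:
the minimum pairwise distance over selections, with respect to `d`. -/
noncomputable def selVals {n : ℕ} (d : (ℝ × ℝ) → (ℝ × ℝ) → ℝ)
    (R : Fin n → Set (ℝ × ℝ)) : Set ℝ :=
  {v : ℝ | ∃ p : Fin n → ℝ × ℝ, (∀ i, p i ∈ R i) ∧ v = minPairDist d p}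

/-!
Let `p` be an optimal selection with value `t`, which exists by compactness, and let `g : ℝ → ℝ` be
a `ℚ`-linear map with `g 1 = 1` that is pointwise close to the identity. Applying `g` to all
coordinates respects the finitely many inequalities relevant to `p`: the image of `p` is again a
selection, and its value is at least `g t`. Hence `g t ≤ t` by optimality. The reflected map
`2 • id - g` is close to the identity as well, so also `2 * t - g t ≤ t`, and therefore `g t = t`.
Finally, moving the values of the identity on a `ℚ`-basis of `ℝ` to nearby rationals shows that `g`
can be taken with values in `ℚ`.
-/

open Filter Topology

section RationalApproximation

variable {V : Type*} [AddCommGroup V] [Module ℚ V]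

lemma tendsto_constr_nhds {ι : Type*} (B : Module.Basis ι ℚ V) (φ : V →ₗ[ℚ] ℝ) :
    Tendsto (B.constr ℚ : (ι → ℝ) → (V →ₗ[ℚ] ℝ)) (𝓝 fun k => φ (B k))
      (comap (⇑) (𝓝 (φ : V → ℝ))) := by
  have hcont : Continuous fun (c : ι → ℝ) (x : V) => B.constr ℚ c x := by
    simp only [Module.Basis.constr_apply, Finsupp.sum]
    fun_prop
  have hlim := hcont.tendsto fun k => φ (B k)
  simp only [B.constr_self] at hlim
  exact tendsto_comap_iff.2 hlim

lemma frequently_nhds_forall_mem_range_ratCast (φ : V →ₗ[ℚ] ℝ) :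
    ∃ᶠ g : V →ₗ[ℚ] ℝ in comap (⇑) (𝓝 (φ : V → ℝ)), ∀ x, g x ∈ range ((↑) : ℚ → ℝ) := by
  let B := Module.Basis.ofVectorSpace ℚ V
  have hdense : φ ∘ B ∈ closure (range (Pi.map fun _ => ((↑) : ℚ → ℝ))) :=
    DenseRange.piMap (fun _ => Rat.denseRange_cast) _
  refine (tendsto_constr_nhds B φ).frequently ((mem_closure_iff_frequently.1 hdense).mono ?_)
  rintro _ ⟨c, rfl⟩ x
  exact ⟨B.constr ℚ c x, by simp [Module.Basis.constr_apply, Finsupp.sum, Rat.smul_def]⟩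

end RationalApproximation

/-- The filter of `ℚ`-linear maps `ℝ → ℝ` that fix `1`, and hence all of `ℚ`, and tend pointwise to
the identity. A property holds eventually along it if it holds for all such maps that are close
enough to the identity at finitely many points. -/
noncomputable def nearId : Filter (ℝ →ₗ[ℚ] ℝ) :=
  comap (⇑) (𝓝 (id : ℝ → ℝ)) ⊓ 𝓟 {g | g 1 = 1}

lemma tendsto_nearId_iff {α : Type*} {l : Filter α} {u : α → ℝ →ₗ[ℚ] ℝ} :
    Tendsto u l nearId ↔ (∀ x, Tendsto (fun a => u a x) l (𝓝 x)) ∧ ∀ᶠ a in l, u a 1 = 1 := by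
  simp only [nearId, tendsto_inf, tendsto_comap_iff, tendsto_pi_nhds, tendsto_principal,
    Function.comp_apply, id_eq, mem_ofPred_eq]

lemma tendsto_apply_nearId (x : ℝ) : Tendsto (fun g : ℝ →ₗ[ℚ] ℝ => g x) nearId (𝓝 x) :=
  (tendsto_nearId_iff.1 tendsto_id).1 x

lemma eventually_nearId_map_ratCast (q : ℚ) :
    ∀ᶠ g : ℝ →ₗ[ℚ] ℝ in nearId, g q = q := by
  filter_upwards [(tendsto_nearId_iff.1 tendsto_id).2] with g hg
  calc g q = g (q • (1 : ℝ)) := by rw [Rat.smul_def, mul_one]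
    _ = q • g 1 := map_smul g q 1
    _ = q := by rw [show g 1 = 1 from hg, Rat.smul_def, mul_one]

lemma eventually_nearId_map_le_map {x y : ℝ} (hxy : x ≤ y) : ∀ᶠ g in nearId, g x ≤ g y := by
  rcases hxy.eq_or_lt with rfl | hlt
  · exact Eventually.of_forall fun _ => le_rfl
  · filter_upwards [(tendsto_apply_nearId x).eventually_lt (tendsto_apply_nearId y) hlt]
      with g hg using hg.le

lemma eventually_nearId_map_mem_Icc {a b : ℚ} {x : ℝ} (hx : x ∈ Icc (a : ℝ) b) :
    ∀ᶠ g in nearId, g x ∈ Icc (a : ℝ) b := by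
  filter_upwards [eventually_nearId_map_le_map hx.1, eventually_nearId_map_le_map hx.2,
    eventually_nearId_map_ratCast a, eventually_nearId_map_ratCast b] with g hax hxb ha hb
  exact ⟨ha ▸ hax, hb ▸ hxb⟩

lemma eventually_nearId_map_abs (x : ℝ) : ∀ᶠ g in nearId, g |x| = |g x| := by
  rcases le_total 0 x with hx | hx
  · filter_upwards [eventually_nearId_map_le_map hx] with g hg
    rw [map_zero] at hg
    rw [abs_of_nonneg hx, abs_of_nonneg hg]
  · filter_upwards [eventually_nearId_map_le_map hx] with g hg
    rw [map_zero] at hg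
    rw [abs_of_nonpos hx, abs_of_nonpos hg, map_neg]

lemma tendsto_reflect_nearId :
    Tendsto (fun g : ℝ →ₗ[ℚ] ℝ => (2 : ℚ) • LinearMap.id - g) nearId nearId := by
  refine tendsto_nearId_iff.2 ⟨fun x => ?_, ?_⟩
  · have hlim := (tendsto_apply_nearId x).const_sub (2 * x)
    rw [show 2 * x - x = x by ring] at hlim
    simpa [Rat.smul_def] using hlim
  · filter_upwards [eventually_nearId_map_ratCast 1] with g hg
    rw [Rat.cast_one] at hg
    norm_num [hg, Rat.smul_def]

lemma eventually_nearId_map_eq_self {t : ℝ} (ht : ∀ᶠ g in nearId, g t ≤ t) :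
    ∀ᶠ g in nearId, g t = t := by
  filter_upwards [ht, tendsto_reflect_nearId.eventually ht] with g hle hreflect
  have hreflect' : 2 * t - g t ≤ t := by simpa [Rat.smul_def] using hreflect
  linarith

lemma tendsto_normalize_nearId :
    Tendsto (fun g : ℝ →ₗ[ℚ] ℝ => (g 1)⁻¹ • g) (comap (⇑) (𝓝 (id : ℝ → ℝ))) nearId := by
  have happly (x : ℝ) :
      Tendsto (fun g : ℝ →ₗ[ℚ] ℝ => g x) (comap (⇑) (𝓝 (id : ℝ → ℝ))) (𝓝 x) :=
    tendsto_pi_nhds.1 tendsto_comap x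
  refine tendsto_nearId_iff.2 ⟨fun x => ?_, ?_⟩
  · simpa using ((happly 1).inv₀ one_ne_zero).mul (happly x)
  · filter_upwards [(happly 1).eventually_ne one_ne_zero] with g hg
    exact inv_mul_cancel₀ hg

lemma frequently_nearId_forall_mem_range_ratCast :
    ∃ᶠ g in nearId, ∀ x, g x ∈ range ((↑) : ℚ → ℝ) := by
  refine tendsto_normalize_nearId.frequently
    ((frequently_nhds_forall_mem_range_ratCast LinearMap.id).mono fun g hg x => ?_)
  obtain ⟨q, hq⟩ := hg x
  obtain ⟨r, hr⟩ := hg 1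
  exact ⟨r⁻¹ * q, by simp [hq, hr]⟩

section MinPairDist

variable {n : ℕ} {d : ℝ × ℝ → ℝ × ℝ → ℝ}

variable (d) in
lemma minPairDist_le (p : Fin n → ℝ × ℝ) {i j : Fin n} (hij : i ≠ j) :
    minPairDist d p ≤ d (p i) (p j) := by
  have hfin : (range fun ij : Fin n × Fin n => d (p ij.1) (p ij.2)).Finite := finite_range _
  refine csInf_le (hfin.bddBelow.mono ?_) ⟨i, j, hij, rfl⟩
  rintro _ ⟨k, l, -, rfl⟩
  exact ⟨(k, l), rfl⟩

lemma le_minPairDist [Nontrivial (Fin n)] {p : Fin n → ℝ × ℝ} {t : ℝ}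
    (h : ∀ i j, i ≠ j → t ≤ d (p i) (p j)) : t ≤ minPairDist d p := by
  obtain ⟨i, j, hij⟩ := exists_pair_ne (Fin n)
  refine le_csInf ⟨_, i, j, hij, rfl⟩ ?_
  rintro _ ⟨k, l, hkl, rfl⟩
  exact h k l hkl

variable (d) in
lemma minPairDist_eq_inf' (p : Fin n → ℝ × ℝ)
    (hne : (Finset.univ : Finset (Fin n)).offDiag.Nonempty) :
    minPairDist d p = Finset.univ.offDiag.inf' hne fun ij => d (p ij.1) (p ij.2) := by
  have : Nontrivial (Fin n) :=
    let ⟨ij, hij⟩ := hne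
    ⟨ij.1, ij.2, (Finset.mem_offDiag.1 hij).2.2⟩
  refine le_antisymm (Finset.le_inf' _ _ fun ij hij => ?_) (le_minPairDist fun i j hij => ?_)
  · exact minPairDist_le d p (Finset.mem_offDiag.1 hij).2.2
  · exact Finset.inf'_le (b := (i, j)) (fun ij => d (p ij.1) (p ij.2))
      (Finset.mem_offDiag.2 ⟨Finset.mem_univ i, Finset.mem_univ j, hij⟩)

lemma continuous_minPairDist [Nontrivial (Fin n)] (hd : Continuous (Function.uncurry d)) :
    Continuous (minPairDist d : (Fin n → ℝ × ℝ) → ℝ) := by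
  have hne : (Finset.univ : Finset (Fin n)).offDiag.Nonempty :=
    let ⟨i, j, hij⟩ := exists_pair_ne (Fin n)
    ⟨(i, j), by simpa using hij⟩
  simp only [funext fun p : Fin n → ℝ × ℝ => minPairDist_eq_inf' d p hne]
  exact Continuous.finset_inf'_apply hne fun ij _ =>
    hd.comp' (f := fun p : Fin n → ℝ × ℝ => (p ij.1, p ij.2)) (by fun_prop)

lemma exists_selection_isGreatest [Nontrivial (Fin n)] (hd : Continuous (Function.uncurry d))
    {R : Fin n → Set (ℝ × ℝ)} (hcomp : ∀ i, IsCompact (R i)) (hne : ∀ i, (R i).Nonempty) :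
    ∃ p : Fin n → ℝ × ℝ, (∀ i, p i ∈ R i) ∧ IsGreatest (selVals d R) (minPairDist d p) := by
  obtain ⟨p, hp, hmax⟩ := (isCompact_univ_pi hcomp).exists_isMaxOn (univ_pi_nonempty_iff.2 hne)
    (continuous_minPairDist hd).continuousOn
  refine ⟨p, fun i => hp i (mem_univ i), ⟨p, fun i => hp i (mem_univ i), rfl⟩, ?_⟩
  rintro _ ⟨p', hp', rfl⟩
  exact hmax fun i _ => hp' i

end MinPairDist

lemma continuous_d1 : Continuous (Function.uncurry d1) := by
  unfold Function.uncurry d1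
  fun_prop

lemma isCompact_rect (a b c d : ℝ) : IsCompact (rect a b c d) :=
  isCompact_Icc.prod isCompact_Icc

lemma rect_nonempty {a b c d : ℝ} (hab : a ≤ b) (hcd : c ≤ d) : (rect a b c d).Nonempty :=
  (nonempty_Icc.2 hab).prod (nonempty_Icc.2 hcd)

lemma eventually_nearId_map_mem_rect {a b c d : ℚ} {x : ℝ × ℝ} (hx : x ∈ rect a b c d) :
    ∀ᶠ g : ℝ →ₗ[ℚ] ℝ in nearId, Prod.map g g x ∈ rect a b c d := by
  filter_upwards [eventually_nearId_map_mem_Icc hx.1, eventually_nearId_map_mem_Icc hx.2]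
    with g h₁ h₂ using ⟨h₁, h₂⟩

lemma eventually_nearId_map_d1 (x y : ℝ × ℝ) :
    ∀ᶠ g : ℝ →ₗ[ℚ] ℝ in nearId, g (d1 x y) = d1 (Prod.map g g x) (Prod.map g g y) := by
  filter_upwards [eventually_nearId_map_abs (x.1 - y.1), eventually_nearId_map_abs (x.2 - y.2)]
    with g h₁ h₂
  simp only [d1, Prod.map_fst, Prod.map_snd, map_add, h₁, h₂, map_sub]

lemma eventually_nearId_map_minPairDist_le {n : ℕ} [Nontrivial (Fin n)]
    (p : Fin n → ℝ × ℝ) :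
    ∀ᶠ g : ℝ →ₗ[ℚ] ℝ in nearId,
      g (minPairDist d1 p) ≤ minPairDist d1 fun i => Prod.map g g (p i) := by
  have hpair (i j : Fin n) (hij : i ≠ j) : ∀ᶠ g : ℝ →ₗ[ℚ] ℝ in nearId,
      g (minPairDist d1 p) ≤ d1 (Prod.map g g (p i)) (Prod.map g g (p j)) := by
    filter_upwards [eventually_nearId_map_le_map (minPairDist_le d1 p hij),
      eventually_nearId_map_d1 (p i) (p j)] with g hle hd1 using hle.trans_eq hd1
  filter_upwards [eventually_all.2 fun i => eventually_all.2 fun j => eventually_all.2 (hpair i j)]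
    with g hg using le_minPairDist hg

theorem stmt13 (n : ℕ) (hn : 2 ≤ n) (lo hi bo tp : Fin n → ℚ)
    (hx : ∀ i, lo i ≤ hi i) (hy : ∀ i, bo i ≤ tp i) :
    ∃ p : Fin n → ℝ × ℝ,
      (∀ i, p i ∈ rect (lo i : ℝ) (hi i : ℝ) (bo i : ℝ) (tp i : ℝ)) ∧
      (∀ i, ∃ qx qy : ℚ, p i = ((qx : ℝ), (qy : ℝ))) ∧
      IsGreatest
        (selVals d1 fun i => rect (lo i : ℝ) (hi i : ℝ) (bo i : ℝ) (tp i : ℝ))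
        (minPairDist d1 p) ∧
      ∃ q : ℚ, minPairDist d1 p = (q : ℝ) := by
  have : Nontrivial (Fin n) := Fin.nontrivial_iff_two_le.2 hn
  obtain ⟨p, hp, hgreatest⟩ := exists_selection_isGreatest continuous_d1
    (fun i => isCompact_rect (lo i) (hi i) (bo i) (tp i))
    (fun i => rect_nonempty (Rat.cast_le.2 (hx i)) (Rat.cast_le.2 (hy i)))
  have hmem : ∀ᶠ g : ℝ →ₗ[ℚ] ℝ in nearId,
      ∀ i, Prod.map g g (p i) ∈ rect (lo i) (hi i) (bo i) (tp i) :=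
    eventually_all.2 fun i => eventually_nearId_map_mem_rect (hp i)
  have hvalue_le := eventually_nearId_map_minPairDist_le p
  have hfix : ∀ᶠ g in nearId, g (minPairDist d1 p) = minPairDist d1 p := by
    refine eventually_nearId_map_eq_self ?_
    filter_upwards [hmem, hvalue_le] with g hg hle using hle.trans (hgreatest.2 ⟨_, hg, rfl⟩)
  obtain ⟨g, hrat, hg, hle, hgfix⟩ :=
    (frequently_nearId_forall_mem_range_ratCast.and_eventually
      (hmem.and (hvalue_le.and hfix))).exists
  have hvalue : minPairDist d1 (fun i => Prod.map g g (p i)) = minPairDist d1 p :=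
    le_antisymm (hgreatest.2 ⟨_, hg, rfl⟩) (hgfix.symm.trans_le hle)
  choose q hq using hrat
  exact ⟨fun i => Prod.map g g (p i), hg,
    fun i => ⟨q (p i).1, q (p i).2, Prod.ext (hq _).symm (hq _).symm⟩,
    hvalue ▸ hgreatest, q (minPairDist d1 p), by rw [hvalue, hq, hgfix]⟩
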